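/- arXiv:1908.10086 — 8 statements merged into one kernel-verified Lean document; each statement's English description precedes it below -/
import Mathlib

section
/- Let V be a type, t : V a destination, f : V → V a forwarding function with f t = t, and d : V → ℕ a distance labeling, i.e. d t = 0 and d v = d (f v) + 1 for every v ≠ t. Then the forwarding path from any node is simple: for every v : V and all indices i < j ≤ d v, the iterates f^[i] v and f^[j] v are distinct. -/
/-- Under a distance labeling, the forwarding path from any node is simple:
the first `d v` iterates are pairwise distinct. -/
theorem distance_labeling_path_simple
    {V : Type*} (t : V) (f : V → V) (d : V → ℕ)
    (ht : f t = t) (hd0 : d t = 0)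
    (hstep : ∀ v : V, v ≠ t → d v = d (f v) + 1) :
    ∀ v : V, ∀ i j : ℕ, i < j → j ≤ d v → f^[i] v ≠ f^[j] v := by
  intro v i j hij hj h
  have key : ∀ k : ℕ, k ≤ d v → d (f^[k] v) + k = d v := by
    intro k
    induction k with
    | zero => intro _; rfl
    | succ k ih =>
      intro hk
      have h1 := ih (by omega)
      have hne : f^[k] v ≠ t := by
        intro he
        rw [he, hd0] at h1
        omega
      have h2 := hstep _ hne
      rw [Function.iterate_succ_apply']
      omega
  have hi' := key i (by omega)
  have hj' := key j hj
  rw [h] at hi'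
  omega
end

section
/- Let V be a type, t : V a destination, f : V → V, d : V → ℕ with d t = 0, and let S ⊆ V be a set of updated nodes such that t ∈ S and for every v ∈ S with v ≠ t one has f v ∈ S and d v = d (f v) + 1. Then for every v ∈ S: all iterates f^[k] v for k ≤ d v lie in S, and f^[d v] v = t. (Invariant of the reverse update scheme of Theorem 1: at any intermediate stage of the asynchronous update, every updated node forwards along updated nodes to the destination, so the partially deployed new path is blackhole- and loop-free.) -/
/-- Invariant of the reverse update scheme of Theorem 1: at any intermediate
stage of the asynchronous update, every updated node forwards along updated
nodes to the destination, so the partially deployed new path is blackhole-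
and loop-free. -/
theorem reverse_update_invariant
    {V : Type*} (t : V) (f : V → V) (d : V → ℕ) (S : Set V)
    (hd0 : d t = 0) (htS : t ∈ S)
    (hS : ∀ v ∈ S, v ≠ t → f v ∈ S ∧ d v = d (f v) + 1) :
    ∀ v ∈ S, (∀ k : ℕ, k ≤ d v → f^[k] v ∈ S) ∧ f^[d v] v = t := by
  have key : ∀ n : ℕ, ∀ v ∈ S, d v = n → (∀ k : ℕ, k ≤ n → f^[k] v ∈ S) ∧ f^[n] v = t := by
    intro n
    induction n with
    | zero =>
      intro v hv hn
      have hvt : v = t := by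
        by_contra hne
        have h := (hS v hv hne).2
        omega
      refine ⟨fun k hk => ?_, hvt⟩
      obtain rfl : k = 0 := by omega
      exact hv
    | succ n ih =>
      intro v hv hn
      have hne : v ≠ t := by
        rintro rfl
        omega
      obtain ⟨hfS, hd⟩ := hS v hv hne
      obtain ⟨h1, h2⟩ := ih (f v) hfS (by omega)
      refine ⟨fun k hk => ?_, h2⟩
      cases k with
      | zero => exact hv
      | succ k => exact h1 k (by omega)
  intro v hv
  exact key (d v) v hv rfl
end

section
/- Let V be a finite type, s t : V with s ≠ t, and f : V → V a forwarding function with f t = t such that (i) f is injective on non-destination nodes, i.e. for all u v ≠ t, f u = f v implies u = v, and (ii) no non-destination node forwards to the source, i.e. f v ≠ s for every v ≠ t. Then the packets starting at the source reach the destination: there exists k with f^[k] s = t. (Correctness of the predecessor–successor labeling scheme of Section IV: consistent predecessor labels make f injective and make s have no predecessor, so by a connectivity argument the path from s cannot loop and reaches t.) -/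
/-- Correctness of the predecessor–successor labeling scheme (Section IV):
if `f` is injective on non-destination nodes and no non-destination node
forwards to the source, then packets starting at the source reach the
destination. -/
theorem predecessor_successor_reaches_destination
    {V : Type*} [Fintype V] (s t : V) (f : V → V)
    (hst : s ≠ t) (ht : f t = t)
    (hinj : ∀ u v : V, u ≠ t → v ≠ t → f u = f v → u = v)
    (hsrc : ∀ v : V, v ≠ t → f v ≠ s) :
    ∃ k : ℕ, f^[k] s = t := by
  by_contra! h
  have key : ∀ m n : ℕ, f^[m] s = f^[n] s → m = n := by
    intro m
    induction m with
    | zero =>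
      intro n hn
      cases n with
      | zero => rfl
      | succ n =>
        rw [Function.iterate_succ_apply'] at hn
        exact absurd hn.symm (hsrc _ (h n))
    | succ m ih =>
      intro n hn
      cases n with
      | zero =>
        rw [Function.iterate_succ_apply'] at hn
        exact absurd hn (hsrc _ (h m))
      | succ n =>
        rw [Function.iterate_succ_apply', Function.iterate_succ_apply'] at hn
        rw [ih n (hinj _ _ (h m) (h n) hn)]
  exact not_injective_infinite_finite (fun k : ℕ => f^[k] s) (fun m n hmn => key m n hmn)
end

section
/- Let V be a finite type, t : V a destination, f : V → V with f t = t, and ver, dep : V → ℕ labels such that for every v ≠ t either ver (f v) > ver v, or ver (f v) = ver v and dep (f v) < dep v. Then every packet reaches the destination: for every v : V there exists k < card V with f^[k] v = t. (Reachability part of Theorem 2: along any forwarding path the pair (version, depth) strictly increases in version or decreases in depth within the same version, so in a finite network the path cannot repeat a node and must end at the destination.) -/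
/-- Reachability part of Theorem 2: with a version-depth labeling on a finite
network, every packet reaches the destination within fewer than `card V`
hops. -/
theorem version_depth_reaches_destination
    {V : Type*} [Fintype V] (t : V) (f : V → V) (ver dep : V → ℕ)
    (ht : f t = t)
    (hlab : ∀ v : V, v ≠ t →
      ver (f v) > ver v ∨ (ver (f v) = ver v ∧ dep (f v) < dep v)) :
    ∀ v : V, ∃ k : ℕ, k < Fintype.card V ∧ f^[k] v = t := by
  intro v
  by_contra! hne
  have step : ∀ i d : ℕ, i + d + 1 ≤ Fintype.card V →
      ver (f^[i + d + 1] v) > ver (f^[i] v) ∨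
        (ver (f^[i + d + 1] v) = ver (f^[i] v) ∧
          dep (f^[i + d + 1] v) < dep (f^[i] v)) := by
    intro i d
    induction d with
    | zero =>
      intro h
      have h1 := hlab _ (hne i (by omega))
      rw [← Function.iterate_succ_apply' f i v] at h1
      exact h1
    | succ d ih =>
      intro h
      have h1 := hlab _ (hne (i + d + 1) (by omega))
      rw [← Function.iterate_succ_apply' f (i + d + 1) v] at h1
      have h2 := ih (by omega)
      change ver (f^[(i + d + 1).succ] v) > _ ∨
        (ver (f^[(i + d + 1).succ] v) = _ ∧ dep (f^[(i + d + 1).succ] v) < _)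
      omega
  have key : ∀ i j : ℕ, i < j → j ≤ Fintype.card V → f^[i] v ≠ f^[j] v := by
    intro i j hij hj heq
    obtain ⟨d, rfl⟩ := Nat.exists_eq_add_of_lt hij
    have h := step i d hj
    rw [← heq] at h
    omega
  have hinj : Function.Injective (fun k : Fin (Fintype.card V + 1) => f^[k.val] v) := by
    intro a b hab
    rcases lt_trichotomy a.val b.val with h | h | h
    · exact absurd hab (key _ _ h (by omega))
    · exact Fin.ext h
    · exact absurd hab.symm (key _ _ h (by omega))
  have hc := Fintype.card_le_of_injective _ hinj
  rw [Fintype.card_fin] at hc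
  omega
end

section
/- Let V be a type, t : V, f : V → V, and ver, dep : V → ℕ arbitrary labels. If there is a forwarding loop avoiding the destination, i.e. some v ≠ t and k ≥ 1 with f^[k] v = v and f^[i] v ≠ t for all i < k, then some node on the loop fails the local check: there exists i < k such that, for u = f^[i] v, neither ver (f u) > ver u nor (ver (f u) = ver u and dep (f u) < dep u). (Local detectability of loops in Theorem 2: if every node on a loop passed the local version-depth check, following the loop back to its start would force the start node to have a strictly larger version number or strictly smaller depth than itself, a contradiction.) -/
/-- Local detectability of loops (Theorem 2): if there is a forwarding loop
avoiding the destination, then some node on the loop fails the local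
version-depth check. -/
theorem loop_locally_detectable
    {V : Type*} (t : V) (f : V → V) (ver dep : V → ℕ)
    (v : V) (k : ℕ) (hv : v ≠ t) (hk : 1 ≤ k)
    (hloop : f^[k] v = v) (havoid : ∀ i : ℕ, i < k → f^[i] v ≠ t) :
    ∃ i : ℕ, i < k ∧
      ¬ (ver (f (f^[i] v)) > ver (f^[i] v) ∨
         (ver (f (f^[i] v)) = ver (f^[i] v) ∧
          dep (f (f^[i] v)) < dep (f^[i] v))) := by
  by_contra hcon
  push Not at hcon
  have key : ∀ j : ℕ, j < k →
      (ver (f^[j + 1] v) > ver v ∨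
        (ver (f^[j + 1] v) = ver v ∧ dep (f^[j + 1] v) < dep v)) := by
    intro j
    induction j with
    | zero =>
      intro h
      simpa using hcon 0 h
    | succ n ih =>
      intro h
      have h1 := ih (by omega)
      have h2 := hcon (n + 1) h
      rw [Function.iterate_succ_apply' f (n + 1) v]
      omega
  have h := key (k - 1) (by omega)
  rw [Nat.sub_add_cancel hk, hloop] at h
  omega
end

section
/- Let V be a finite nonempty type, t : V, f : V → V with f t = t, and ver, dep : V → ℕ labels such that for every v ≠ t either ver (f v) > ver v, or ver (f v) = ver v and dep v = dep (f v) + 1. Let M be the maximum of ver over V. Then the nodes carrying the largest version number form a correct forwarding tree: for every v with ver v = M, all iterates f^[i] v for i ≤ dep v also satisfy ver (f^[i] v) = M, and f^[dep v] v = t. (Claim in the proof of Theorem 2 that nodes using the largest version number never forward to nodes of other versions and reach the destination in exactly dep v hops.) -/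
/-- Nodes carrying the largest version number form a correct forwarding tree
(claim in the proof of Theorem 2): they never forward to nodes of other
versions and reach the destination in exactly `dep v` hops. -/
theorem largest_version_forms_tree
    {V : Type*} [Fintype V] [Nonempty V] (t : V) (f : V → V)
    (ver dep : V → ℕ) (ht : f t = t)
    (hlab : ∀ v : V, v ≠ t →
      ver (f v) > ver v ∨ (ver (f v) = ver v ∧ dep v = dep (f v) + 1))
    (M : ℕ) (hM : M = Finset.univ.sup ver) :
    ∀ v : V, ver v = M →
      (∀ i : ℕ, i ≤ dep v → ver (f^[i] v) = M) ∧ f^[dep v] v = t := by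
  have hle : ∀ v, ver v ≤ M := fun v => hM ▸ Finset.le_sup (Finset.mem_univ v)
  have key : ∀ n : ℕ, ∀ v : V, dep v = n → ver v = M →
      (∀ i : ℕ, i ≤ n → ver (f^[i] v) = M) ∧ f^[n] v = t := by
    intro n
    induction n with
    | zero =>
      intro v hd hv
      by_cases h : v = t
      · refine ⟨fun i hi => ?_, by simpa using h⟩
        obtain rfl : i = 0 := by omega
        simpa using hv
      · have h1 := hlab v h
        have h2 := hle (f v)
        omega
    | succ n ih =>
      intro v hd hv
      by_cases h : v = t
      · subst h
        have hfix : ∀ k : ℕ, f^[k] v = v := fun k => Function.iterate_fixed ht k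
        exact ⟨fun i _ => by rw [hfix]; exact hv, hfix _⟩
      · have h1 := hlab v h
        have h2 := hle (f v)
        obtain ⟨ha, hb⟩ := ih (f v) (by omega) (by omega)
        refine ⟨fun i hi => ?_, by rw [Function.iterate_succ_apply]; exact hb⟩
        cases i with
        | zero => simpa using hv
        | succ j => rw [Function.iterate_succ_apply]; exact ha j (by omega)
  exact fun v hv => key (dep v) v rfl hv
end

section
/- Fix l ≥ 2 and consider nodes 0, …, l−1 together with a destination node d. The old rule forwards node i to node i+1 for i < l−1 and node l−1 to d; the new rule forwards node 0 to d and node i to node i−1 for i ≥ 1. For a set S ⊆ {0, …, l−1} of updated nodes, the mixed forwarding function g_S forwards i according to the new rule if i ∈ S and according to the old rule otherwise, and fixes d. Then g_S is loop-free (no node i ∈ {0, …, l−1} satisfies g_S^[k](i) = i for some k ≥ 1) if and only if S is downward closed, i.e. i ∈ S whenever j ∈ S and i ≤ j. (Structure of the chain instance of Figure 1: updating node j while node j−1 is not yet updated creates the two-cycle {j−1, j}, and conversely every initial segment of updates is loop-free.) -/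
/-- The mixed forwarding function of the chain instance of Figure 1: nodes
`0, …, l-1` plus a destination (modeled as node `l`).  An updated node
`i ∈ S` uses the new rule (node `0` forwards to the destination, node `i ≥ 1`
forwards to `i - 1`), while a non-updated node `i < l` uses the old rule
(forward to `i + 1`, node `l - 1` forwarding to the destination `l`); the
destination (and anything outside the chain) is a fixed point. -/
def chainFwd (l : ℕ) (S : Finset ℕ) (i : ℕ) : ℕ :=
  if i < l then (if i ∈ S then (if i = 0 then l else i - 1) else i + 1) else i

/-- Structure of the chain instance of Figure 1: the mixed forwarding
function `chainFwd l S` is loop-free if and only if the set `S` of updated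
nodes is downward closed. -/
theorem chain_loop_free_iff_downward_closed
    (l : ℕ) (hl : 2 ≤ l) (S : Finset ℕ) (hS : ∀ i ∈ S, i < l) :
    (∀ i : ℕ, i < l → ∀ k : ℕ, 1 ≤ k → (chainFwd l S)^[k] i ≠ i) ↔
      (∀ i j : ℕ, j ∈ S → i ≤ j → i ∈ S) := by
  constructor
  · intro h i j hj hij
    have step : ∀ m, m + 1 ∈ S → m ∈ S := by
      intro m hm
      by_contra hn
      have h1 := hS _ hm
      have e1 : chainFwd l S (m + 1) = m := by simp [chainFwd, hm, h1]
      have e2 : chainFwd l S m = m + 1 := by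
        have : m < l := by omega
        simp [chainFwd, hn, this]
      refine h (m + 1) h1 2 (by norm_num) ?_
      simp [Function.iterate_succ_apply, e1, e2]
    induction j with
    | zero =>
      have : i = 0 := by omega
      rwa [this]
    | succ m ih =>
      rcases Nat.lt_or_ge i (m + 1) with hlt | hge
      · exact ih (step m hj) (by omega)
      · have : i = m + 1 := by omega
        rwa [this]
  · intro h i hi k hk
    have hlS : l ∉ S := fun hh => lt_irrefl _ (hS l hh)
    obtain ⟨n, rfl⟩ : ∃ n, k = n + 1 := ⟨k - 1, by omega⟩
    by_cases hiS : i ∈ S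
    · have key : ∀ n, ((chainFwd l S)^[n + 1] i ∈ S ∧ (chainFwd l S)^[n + 1] i < i) ∨
          (chainFwd l S)^[n + 1] i = l := by
        have stepP : ∀ x, x ∈ S → x ≤ i →
            (chainFwd l S x ∈ S ∧ chainFwd l S x < i) ∨ chainFwd l S x = l := by
          intro x hx hxi
          have hxl := hS x hx
          by_cases h0 : x = 0
          · right
            have : 0 < l := by omega
            subst h0
            simp [chainFwd, hx, this]
          · left
            have e : chainFwd l S x = x - 1 := by simp [chainFwd, hx, hxl, h0]
            rw [e]
            exact ⟨h _ x hx (by omega), by omega⟩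
        intro n
        induction n with
        | zero => exact stepP i hiS le_rfl
        | succ n ih =>
          rw [Function.iterate_succ_apply']
          rcases ih with ⟨h1, h2⟩ | h1
          · exact stepP _ h1 h2.le
          · right
            rw [h1]
            simp [chainFwd]
      rcases key n with h1 | h1 <;> omega
    · have key : ∀ n, (chainFwd l S)^[n + 1] i ∉ S ∧ i < (chainFwd l S)^[n + 1] i := by
        have up : ∀ x, x ∉ S → x + 1 ∉ S := fun x hx hx1 => hx (h x _ hx1 (by omega))
        intro n
        induction n with
        | zero =>
          have e : chainFwd l S i = i + 1 := by simp [chainFwd, hiS, hi]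
          simp only [zero_add, Function.iterate_one, e]
          exact ⟨up i hiS, by omega⟩
        | succ n ih =>
          rw [Function.iterate_succ_apply']
          obtain ⟨h1, h2⟩ := ih
          generalize (chainFwd l S)^[n + 1] i = x at h1 h2
          by_cases hx : x < l
          · have e : chainFwd l S x = x + 1 := by simp [chainFwd, h1, hx]
            rw [e]
            exact ⟨up x h1, by omega⟩
          · have e : chainFwd l S x = x := by simp [chainFwd, hx]
            rw [e]
            exact ⟨h1, h2⟩
      exact (key n).2.ne'
end

section
/- Fix l ≥ 2 and consider the chain instance: nodes 0, …, l−1 and a destination d, old rule forwarding i to i+1 for i < l−1 and l−1 to d, new rule forwarding 0 to d and i to i−1 for i ≥ 1; for S ⊆ {0, …, l−1}, the mixed forwarding g_S uses the new rule on S and the old rule elsewhere. Consider any round-based update schedule ∅ = S_0 ⊆ S_1 ⊆ ⋯ ⊆ S_r = {0, …, l−1} that is safe under asynchrony, i.e. for every round j and every intermediate set T with S_j ⊆ T ⊆ S_{j+1}, the mixed forwarding g_T is loop-free. Then r ≥ l: each round can safely update at most one rule, so consistently updating this instance requires a number of rounds linear in the number of nodes. (The Ω(n)-rounds lower bound for centralized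 consistent updates of Figure 1.) -/
/-- The Ω(n)-rounds lower bound for centralized consistent updates of
Figure 1: any round-based update schedule for the chain instance that is
safe under asynchrony (every intermediate set between consecutive rounds
yields loop-free mixed forwarding) needs at least `l` rounds. -/
theorem chain_update_lower_bound
    (l : ℕ) (hl : 2 ≤ l) (r : ℕ) (Ss : ℕ → Finset ℕ)
    (h0 : Ss 0 = ∅) (hr : Ss r = Finset.range l)
    (hmono : ∀ j : ℕ, j < r → Ss j ⊆ Ss (j + 1))
    (hsafe : ∀ j : ℕ, j < r → ∀ T : Finset ℕ, Ss j ⊆ T → T ⊆ Ss (j + 1) →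
      ∀ i : ℕ, i < l → ∀ k : ℕ, 1 ≤ k → (chainFwd l T)^[k] i ≠ i) :
    l ≤ r := by
  have key : ∀ j : ℕ, j ≤ r → ∀ i : ℕ, i < l → i ∈ Ss j → i < j := by
    intro j
    induction j with
    | zero => intro _ i _ hi; simp [h0] at hi
    | succ j ih =>
      intro hj i hil hi
      by_contra hlt
      have hnot : i ∉ Ss j := fun h => by have := ih (by omega) i hil h; omega
      obtain ⟨m, rfl⟩ : ∃ m, i = m + 1 := ⟨i - 1, by omega⟩
      have hm : m ∉ Ss j := fun h => by have := ih (by omega) m (by omega) h; omega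
      refine hsafe j (by omega) (insert (m + 1) (Ss j)) (Finset.subset_insert _ _)
        (Finset.insert_subset hi (hmono j (by omega))) m (by omega) 2 (by omega) ?_
      have h1 : chainFwd l (insert (m + 1) (Ss j)) m = m + 1 := by
        simp [chainFwd, hm, show m < l by omega]
      have h2 : chainFwd l (insert (m + 1) (Ss j)) (m + 1) = m := by
        simp [chainFwd, hil]
      change chainFwd l _ (chainFwd l _ m) = m
      rw [h1, h2]
  have := key r le_rfl (l - 1) (by omega) (by rw [hr, Finset.mem_range]; omega)
  omega
end
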